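/- For every ε > 0 there exists C_ε > 0 with the following property. For all dyadic N, N₁, N₂, N₃ ≥ 1, all m ∈ ℤ, and every fixed n₃ ∈ ℤ², the number of triples (n, n₁, n₂) with (n, n₁, n₂, n₃) ∈ S^{𝐍,(m)} is at most C_ε · min( N₁² (min(N, N₂))^ε, (N N₁)^{1+ε}, (N N₂)^{1+ε}, (N₁ N₂)^{1+ε} ), uniformly in n₃ and m. -/

import Mathlib

/-- Euclidean norm of a lattice point in `ℤ²`. -/
noncomputable def znorm (n : ℤ × ℤ) : ℝ := Real.sqrt ((n.1 : ℝ) ^ 2 + (n.2 : ℝ) ^ 2)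

/-- Squared Euclidean norm `|n|²` of `n ∈ ℤ²`, as an integer. -/
def nsq (n : ℤ × ℤ) : ℤ := n.1 ^ 2 + n.2 ^ 2

/-- `φ(n̄) = |n|² − |n₁|² + |n₂|² − |n₃|²`. -/
def phiFn (n n₁ n₂ n₃ : ℤ × ℤ) : ℤ := nsq n - nsq n₁ + nsq n₂ - nsq n₃

/-- `N` is a dyadic number: `N = 2^k` for some integer `k ≥ 0`. -/
def IsDyadic (N : ℝ) : Prop := ∃ k : ℕ, N = 2 ^ k

/-- `|n| ∼ N`: for dyadic `N ≥ 2` this means `N/2 < |n| ≤ N`; for `N = 1` it means `|n| ≤ 1`. -/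
def simDyadic (N : ℝ) (n : ℤ × ℤ) : Prop :=
  (N = 1 ∧ znorm n ≤ 1) ∨ (N ≠ 1 ∧ N / 2 < znorm n ∧ znorm n ≤ N)

/-- Membership in the set `S^{𝐍,(m)}`. -/
def SMem (N N₁ N₂ N₃ : ℝ) (m : ℤ) (n n₁ n₂ n₃ : ℤ × ℤ) : Prop :=
  n = n₁ - n₂ + n₃ ∧ n ≠ n₁ ∧ n ≠ n₃ ∧ phiFn n n₁ n₂ n₃ = m ∧
    simDyadic N n ∧ simDyadic N₁ n₁ ∧ simDyadic N₂ n₂ ∧ simDyadic N₃ n₃ 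

/-!
On the support of the count, `φ = 2 ⟨n - n₁, n - n₃⟩`. For fixed `n₁` the point `n` therefore lies
on a circle, whose equation in `ℤ[i]` reads `w * star w = k`; writing `X = n - n₃` and
`Y = n - n₁` and fixing the first coordinates of `X` and `Y`, the second coordinates lie on a
hyperbola `X₂ * Y₂ = k` over `ℤ`. For `k ≠ 0` both are curves `s * t = k` over a unique
factorization domain, so they carry `O(|k| ^ ε)` points by the divisor bound. To get a bound in
terms of the size `D` of the window instead of `k`, note that three points on such a curve satisfy
`k * det ^ 2 = (s₁ - s₂) (s₂ - s₃) (s₃ - s₁) * (t₂ - t₁) (t₃ - t₂) (t₁ - t₃)`, where `det` is twice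
the area of the triangle they span. Hence a window with at least three points forces `|k| ≤ D ^ 6`,
whatever the value of `m` and the position of `n₃`.
-/

open scoped Finset

section DivisorBound

theorem natCast_add_one_le_mul_pow {x y : ℝ} (hx : 1 < x) (hxy : x ≤ y) (e : ℕ) :
    (e + 1 : ℝ) ≤ (1 + 1 / (x - 1)) * y ^ e := by
  have hx' : 0 < x - 1 := by linarith
  calc (e + 1 : ℝ) ≤ (1 + 1 / (x - 1)) * (1 + e * (x - 1)) := by
        have h : (1 + 1 / (x - 1)) * (1 + e * (x - 1)) = e + 1 + (e * (x - 1) + 1 / (x - 1)) := by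
          field_simp
          ring
        rw [h]
        exact le_add_of_nonneg_right (by positivity)
    _ ≤ (1 + 1 / (x - 1)) * x ^ e := by
        gcongr
        simpa using one_add_mul_le_pow (by linarith : -2 ≤ x - 1) e
    _ ≤ (1 + 1 / (x - 1)) * y ^ e := by gcongr

theorem natCast_add_one_le_pow {y : ℝ} (hy : 2 ≤ y) (e : ℕ) : (e + 1 : ℝ) ≤ y ^ e :=
  calc (e + 1 : ℝ) ≤ 2 ^ e := by exact_mod_cast e.lt_two_pow_self
    _ ≤ y ^ e := by gcongr

theorem exists_card_Iic_le_mul_prod_rpow {ι : Type*} [DecidableEq ι] {ν : ι → ℕ}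
    (hν : ∀ B : ℕ, {i | ν i < B}.Finite) {ε : ℝ} (hε : 0 < ε) :
    ∃ C : ℝ, 0 < C ∧ ∀ s : Multiset ι, (∀ i ∈ s, 2 ≤ ν i) →
      (#(Finset.Iic s) : ℝ) ≤ C * ((s.map ν).prod : ℝ) ^ ε := by
  obtain ⟨B, hB⟩ : ∃ B : ℕ, ∀ n : ℕ, B ≤ n → (2 : ℝ) ≤ (n : ℝ) ^ ε :=
    Filter.eventually_atTop.1 <|
      ((tendsto_rpow_atTop hε).comp tendsto_natCast_atTop_atTop).eventually_ge_atTop 2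
  have two_rpow : (1 : ℝ) < 2 ^ ε := Real.one_lt_rpow (by norm_num) hε
  set K : ℝ := 1 + 1 / (2 ^ ε - 1)
  have one_le_K : 1 ≤ K := le_add_of_nonneg_right (one_div_nonneg.2 (by linarith))
  refine ⟨K ^ #(hν B).toFinset, by positivity, fun s hs ↦ ?_⟩
  have factor_le (i : ι) (hi : i ∈ s.toFinset) :
      (s.count i + 1 : ℝ) ≤ (if ν i < B then K else 1) * ((ν i : ℝ) ^ ε) ^ s.count i := by
    split_ifs with h
    · refine natCast_add_one_le_mul_pow two_rpow ?_ _
      gcongr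
      exact_mod_cast hs i (Multiset.mem_toFinset.1 hi)
    · rw [one_mul]
      exact natCast_add_one_le_pow (hB _ (not_lt.1 h)) _
  have prod_const_le : ∏ i ∈ s.toFinset, (if ν i < B then K else 1) ≤ K ^ #(hν B).toFinset := by
    rw [Finset.prod_ite, Finset.prod_const, Finset.prod_const_one, mul_one]
    exact pow_le_pow_right₀ one_le_K (Finset.card_le_card fun i hi ↦ by simp_all)
  have prod_rpow : ∏ i ∈ s.toFinset, ((ν i : ℝ) ^ ε) ^ s.count i = ((s.map ν).prod : ℝ) ^ ε := by
    rw [Finset.prod_multiset_map_count, Nat.cast_prod,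
      ← Real.finsetProd_rpow _ _ fun i _ ↦ Nat.cast_nonneg _]
    exact Finset.prod_congr rfl fun i _ ↦ by
      rw [Nat.cast_pow, Real.rpow_pow_comm (Nat.cast_nonneg _)]
  calc (#(Finset.Iic s) : ℝ) = ∏ i ∈ s.toFinset, (s.count i + 1 : ℝ) := by
        rw [Multiset.card_Iic]
        push_cast
        rfl
    _ ≤ ∏ i ∈ s.toFinset, (if ν i < B then K else 1) * ((ν i : ℝ) ^ ε) ^ s.count i :=
        Finset.prod_le_prod (fun i _ ↦ by positivity) factor_le
    _ ≤ K ^ #(hν B).toFinset * ((s.map ν).prod : ℝ) ^ ε := by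
        rw [Finset.prod_mul_distrib, prod_rpow]
        gcongr

theorem map_unit_eq_one {M F : Type*} [Monoid M] [FunLike F M ℕ] [MonoidHomClass F M ℕ]
    (f : F) (u : Mˣ) : f u = 1 :=
  Nat.isUnit_iff.1 (u.isUnit.map f)

/-- A multiplicative size function with finitely many elements of each size, whose elements of
size `1` are units: the common feature of `|·|` on `ℤ` and of the norm on `ℤ[i]`, which lets one
divisor bound serve both rings. -/
structure IsFiniteNorm {R : Type*} [CommMonoidWithZero R] (ν : R →*₀ ℕ) : Prop where
  eq_zero : ∀ x, ν x = 0 → x = 0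
  isUnit : ∀ x, ν x = 1 → IsUnit x
  finite_lt : ∀ B : ℕ, {x | ν x < B}.Finite

namespace IsFiniteNorm

variable {R : Type*} [CommMonoidWithZero R] {ν : R →*₀ ℕ}

theorem finite_units (hν : IsFiniteNorm ν) : Finite Rˣ :=
  Set.finite_univ_iff.1 <| ((hν.finite_lt 2).preimage Units.val_injective.injOn).subset
    fun u _ ↦ (map_unit_eq_one ν u).trans_lt one_lt_two

theorem two_le_of_irreducible (hν : IsFiniteNorm ν) {p : R} (hp : Irreducible p) : 2 ≤ ν p :=
  (Nat.two_le_iff _).2 ⟨fun h ↦ hp.ne_zero (hν.eq_zero p h), fun h ↦ hp.not_isUnit (hν.isUnit p h)⟩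

end IsFiniteNorm

section UniqueFactorization

open UniqueFactorizationMonoid

variable {R : Type*} [CommMonoidWithZero R] [UniqueFactorizationMonoid R]

theorem card_le_card_units_mul_card_Iic_normalizedFactors [NormalizationMonoid R] [DecidableEq R]
    [Finite Rˣ] {a : R} (ha : a ≠ 0) {S : Finset R} (hS : ∀ d ∈ S, d ∣ a) :
    #S ≤ Nat.card Rˣ * #(Finset.Iic (normalizedFactors a)) := by
  have := Fintype.ofFinite Rˣ
  have subset_image : S ⊆ ((Finset.univ : Finset Rˣ) ×ˢ Finset.Iic (normalizedFactors a)).image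
      fun q ↦ q.2.prod * q.1 := fun d hd ↦ by
    have hd0 : d ≠ 0 := ne_zero_of_dvd_ne_zero ha (hS d hd)
    obtain ⟨u, hu⟩ := prod_normalizedFactors hd0
    refine Finset.mem_image.2 ⟨(u, normalizedFactors d), ?_, hu⟩
    simpa using (dvd_iff_normalizedFactors_le_normalizedFactors hd0 ha).1 (hS d hd)
  refine (Finset.card_le_card subset_image).trans (Finset.card_image_le.trans_eq ?_)
  rw [Finset.card_product, Finset.card_univ, Nat.card_eq_fintype_card]

theorem prod_map_normalizedFactors [NormalizationMonoid R] {ν : R →*₀ ℕ}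
    {a : R} (ha : a ≠ 0) :
    ((normalizedFactors a).map ν).prod = ν a := by
  obtain ⟨u, hu⟩ := prod_normalizedFactors ha
  rw [Multiset.prod_hom, ← congrArg ν hu, map_mul, map_unit_eq_one, mul_one]

theorem IsFiniteNorm.exists_card_divisors_le {ν : R →*₀ ℕ} (hν : IsFiniteNorm ν)
    {ε : ℝ} (hε : 0 < ε) :
    ∃ C : ℝ, 0 < C ∧ ∀ a ≠ 0, ∀ S : Finset R, (∀ d ∈ S, d ∣ a) → (#S : ℝ) ≤ C * (ν a : ℝ) ^ ε := by
  classical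
  let : StrongNormalizationMonoid R := UniqueFactorizationMonoid.strongNormalizationMonoid
  have := hν.finite_units
  obtain ⟨C, hC, hIic⟩ := exists_card_Iic_le_mul_prod_rpow hν.finite_lt hε
  refine ⟨Nat.card Rˣ * C, by have := Nat.card_pos (α := Rˣ); positivity, fun a ha S hS ↦ ?_⟩
  calc (#S : ℝ) ≤ Nat.card Rˣ * #(Finset.Iic (normalizedFactors a)) := by
        exact_mod_cast card_le_card_units_mul_card_Iic_normalizedFactors ha hS
    _ ≤ Nat.card Rˣ * (C * (ν a : ℝ) ^ ε) := by
        rw [← prod_map_normalizedFactors (ν := ν) ha]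
        gcongr
        exact hIic _ fun p hp ↦ hν.two_le_of_irreducible (irreducible_of_normalized_factor p hp)
    _ = Nat.card Rˣ * C * (ν a : ℝ) ^ ε := by ring

end UniqueFactorization

end DivisorBound

section Hyperbola

theorem mul_det_sq_eq_of_mul_eq {R : Type*} [CommRing R] {k s₁ t₁ s₂ t₂ s₃ t₃ : R}
    (h₁ : s₁ * t₁ = k) (h₂ : s₂ * t₂ = k) (h₃ : s₃ * t₃ = k) :
    k * ((s₂ - s₁) * (t₃ - t₁) - (s₃ - s₁) * (t₂ - t₁)) ^ 2 =
      (s₁ - s₂) * (s₂ - s₃) * (s₃ - s₁) * ((t₂ - t₁) * (t₃ - t₂) * (t₁ - t₃)) := by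
  grind

theorem injOn_fst_of_mul_eq {M : Type*} [MulZeroClass M] [IsLeftCancelMulZero M] {k : M}
    (hk : k ≠ 0) : Set.InjOn Prod.fst {p : M × M | p.1 * p.2 = k} := by
  rintro ⟨s, t⟩ hp ⟨-, u⟩ hq rfl
  have hs : s ≠ 0 := left_ne_zero_of_mul (hp.trans_ne hk)
  exact congrArg _ (mul_left_cancel₀ hs (hp.trans hq.symm))

theorem injOn_snd_of_mul_eq {M : Type*} [MulZeroClass M] [IsRightCancelMulZero M] {k : M}
    (hk : k ≠ 0) : Set.InjOn Prod.snd {p : M × M | p.1 * p.2 = k} := by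
  rintro ⟨s, t⟩ hp ⟨u, -⟩ hq rfl
  have ht : t ≠ 0 := right_ne_zero_of_mul (hp.trans_ne hk)
  exact congrArg (·, t) (mul_right_cancel₀ ht (hp.trans hq.symm))

variable {R : Type*} [CommRing R] [UniqueFactorizationMonoid R] {ν : R →*₀ ℕ} {k : R}

theorem IsFiniteNorm.map_le_pow_six (hν : IsFiniteNorm ν) (hk : k ≠ 0) {D : ℝ} {S : Finset (R × R)}
    (hS : 2 < #S) (mul_eq : ∀ p ∈ S, p.1 * p.2 = k)
    (fst_le : ∀ p ∈ S, ∀ q ∈ S, (ν (p.1 - q.1) : ℝ) ≤ D)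
    (snd_le : ∀ p ∈ S, ∀ q ∈ S, (ν (p.2 - q.2) : ℝ) ≤ D) : (ν k : ℝ) ≤ D ^ 6 := by
  obtain ⟨p, hp, q, hq, r, hr, hpq, hpr, hqr⟩ := Finset.two_lt_card.1 hS
  have fst_sub_ne {x y : R × R} (hx : x ∈ S) (hy : y ∈ S) (h : x ≠ y) : x.1 - y.1 ≠ 0 :=
    sub_ne_zero.2 <| (injOn_fst_of_mul_eq hk).ne (mul_eq x hx) (mul_eq y hy) h
  have snd_sub_ne {x y : R × R} (hx : x ∈ S) (hy : y ∈ S) (h : x ≠ y) : x.2 - y.2 ≠ 0 :=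
    sub_ne_zero.2 <| (injOn_snd_of_mul_eq hk).ne (mul_eq x hx) (mul_eq y hy) h
  set d := (q.1 - p.1) * (r.2 - p.2) - (r.1 - p.1) * (q.2 - p.2)
  have key : k * d ^ 2 =
      (p.1 - q.1) * (q.1 - r.1) * (r.1 - p.1) * ((q.2 - p.2) * (r.2 - q.2) * (p.2 - r.2)) :=
    mul_det_sq_eq_of_mul_eq (mul_eq p hp) (mul_eq q hq) (mul_eq r hr)
  have hd : d ≠ 0 := fun hd ↦ by
    refine mul_ne_zero
      (mul_ne_zero (mul_ne_zero (fst_sub_ne hp hq hpq) (fst_sub_ne hq hr hqr))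
        (fst_sub_ne hr hp hpr.symm))
      (mul_ne_zero (mul_ne_zero (snd_sub_ne hq hp hpq.symm) (snd_sub_ne hr hq hqr.symm))
        (snd_sub_ne hp hr hpr)) (key.symm.trans ?_)
    rw [hd, zero_pow two_ne_zero, mul_zero]
  have one_le : 1 ≤ ν d := Nat.one_le_iff_ne_zero.2 (mt (hν.eq_zero d) hd)
  calc (ν k : ℝ) ≤ ν k * ν d ^ 2 := by
        exact_mod_cast Nat.le_mul_of_pos_right _ (by positivity)
    _ = ν (p.1 - q.1) * ν (q.1 - r.1) * ν (r.1 - p.1)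
        * (ν (q.2 - p.2) * ν (r.2 - q.2) * ν (p.2 - r.2)) := by
      exact_mod_cast by simpa only [map_mul, map_pow] using congrArg ν key
    _ ≤ D * D * D * (D * D * D) := by
      have := (Nat.cast_nonneg _).trans (fst_le p hp q hq)
      gcongr <;> apply_assumption <;> assumption
    _ = D ^ 6 := by ring

theorem IsFiniteNorm.exists_card_mul_eq_le (hν : IsFiniteNorm ν) {ε : ℝ} (hε : 0 < ε) :
    ∃ C : ℝ, 0 < C ∧ ∀ k ≠ 0, ∀ D : ℝ, 1 ≤ D → ∀ S : Finset (R × R), (∀ p ∈ S, p.1 * p.2 = k) →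
      (∀ p ∈ S, ∀ q ∈ S, (ν (p.1 - q.1) : ℝ) ≤ D) →
      (∀ p ∈ S, ∀ q ∈ S, (ν (p.2 - q.2) : ℝ) ≤ D) → (#S : ℝ) ≤ C * D ^ ε := by
  classical
  obtain ⟨C, hC, hdiv⟩ := hν.exists_card_divisors_le (by positivity : 0 < ε / 6)
  refine ⟨C + 2, by positivity, fun k hk D hD S mul_eq fst_le snd_le ↦ ?_⟩
  have one_le : 1 ≤ D ^ ε := Real.one_le_rpow hD hε.le
  obtain hS | hS := le_or_gt #S 2
  · calc (#S : ℝ) ≤ 2 := by exact_mod_cast hS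
      _ ≤ (C + 2) * D ^ ε := by nlinarith
  calc (#S : ℝ) = #(S.image Prod.fst) := by
        rw [Finset.card_image_of_injOn ((injOn_fst_of_mul_eq hk).mono mul_eq)]
    _ ≤ C * (ν k : ℝ) ^ (ε / 6) := hdiv k hk _ fun d hd ↦ by
        obtain ⟨p, hp, rfl⟩ := Finset.mem_image.1 hd
        exact ⟨p.2, (mul_eq p hp).symm⟩
    _ ≤ C * (D ^ 6) ^ (ε / 6) := by
        gcongr
        exact hν.map_le_pow_six hk hS mul_eq fst_le snd_le
    _ = C * D ^ ε := by
        rw [← Real.rpow_natCast_mul (by positivity)]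
        congr 2
        push_cast
        ring
    _ ≤ (C + 2) * D ^ ε := by gcongr; linarith

end Hyperbola

section Norms

theorem isFiniteNorm_natAbsHom : IsFiniteNorm Int.natAbsHom where
  eq_zero _ := Int.natAbs_eq_zero.1
  isUnit _ := Int.isUnit_iff_natAbs_eq.2
  finite_lt B := (Set.finite_Icc (-B : ℤ) B).subset fun x (hx : x.natAbs < B) ↦ by
    rw [Set.mem_Icc]
    omega

/-- The norm `w ↦ w * star w` of `ℤ[i]` with values in `ℕ`, bundled so that it can serve as an
`IsFiniteNorm`. -/
def gaussianNorm : GaussianInt →*₀ ℕ :=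
  Int.natAbsHom.comp { Zsqrtd.normMonoidHom with map_zero' := Zsqrtd.norm_zero }

theorem gaussianNorm_apply (w : GaussianInt) : gaussianNorm w = w.norm.natAbs :=
  rfl

theorem natCast_gaussianNorm (w : GaussianInt) :
    (gaussianNorm w : ℝ) = (w.re : ℝ) ^ 2 + (w.im : ℝ) ^ 2 := by
  have : (gaussianNorm w : ℤ) = w.re ^ 2 + w.im ^ 2 := by
    rw [gaussianNorm_apply, GaussianInt.abs_natCast_norm, Zsqrtd.norm_def]
    ring
  exact_mod_cast this

theorem isFiniteNorm_gaussianNorm : IsFiniteNorm gaussianNorm where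
  eq_zero w hw := GaussianInt.norm_eq_zero.1 (Int.natAbs_eq_zero.1 hw)
  isUnit w := Zsqrtd.norm_eq_one_iff.1
  finite_lt B := by
    refine (((Set.finite_Icc (-B : ℤ) B).prod (Set.finite_Icc (-B : ℤ) B)).image
      fun p ↦ (⟨p.1, p.2⟩ : GaussianInt)).subset fun w (hw : gaussianNorm w < B) ↦
        ⟨(w.re, w.im), ?_, rfl⟩
    have : w.re ^ 2 + w.im ^ 2 < B := by
      exact_mod_cast (natCast_gaussianNorm w).symm.trans_lt (Nat.cast_lt.2 hw)
    simp only [Set.mem_prod, Set.mem_Icc]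
    refine ⟨⟨?_, ?_⟩, ?_, ?_⟩ <;> nlinarith

theorem exists_card_norm_eq_le {ε : ℝ} (hε : 0 < ε) :
    ∃ C : ℝ, 0 < C ∧ ∀ (k : ℤ) (D : ℝ), 1 ≤ D → ∀ S : Finset GaussianInt, (∀ w ∈ S, w.norm = k) →
      (∀ w ∈ S, ∀ z ∈ S, (gaussianNorm (w - z) : ℝ) ≤ D) → (#S : ℝ) ≤ C * D ^ ε := by
  obtain ⟨C, hC, hcard⟩ := isFiniteNorm_gaussianNorm.exists_card_mul_eq_le hε
  refine ⟨C + 1, by positivity, fun k D hD S norm_eq sub_le ↦ ?_⟩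
  have one_le : 1 ≤ D ^ ε := Real.one_le_rpow hD hε.le
  obtain rfl | hk := eq_or_ne k 0
  · have : S ⊆ {0} := fun w hw ↦
      Finset.mem_singleton.2 (GaussianInt.norm_eq_zero.1 (norm_eq w hw))
    calc (#S : ℝ) ≤ 1 := by exact_mod_cast Finset.card_le_card this
      _ ≤ (C + 1) * D ^ ε := by nlinarith
  calc (#S : ℝ) = #(S.image fun w ↦ (w, star w)) := by
        rw [Finset.card_image_of_injective _ fun w z h ↦ congrArg Prod.fst h]
    _ ≤ C * D ^ ε := by
      refine hcard k (Int.cast_ne_zero.2 hk) D hD _ ?_ ?_ ?_ <;>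
        simp only [Finset.forall_mem_image]
      · exact fun w hw ↦ by rw [← Zsqrtd.norm_eq_mul_conj, norm_eq w hw]
      · exact sub_le
      · intro w hw z hz
        rw [← star_sub, gaussianNorm_apply, Zsqrtd.norm_conj]
        exact sub_le w hw z hz
    _ ≤ (C + 1) * D ^ ε := by gcongr; linarith

end Norms

section LatticeBoxes

/-- The integers within distance `R` of `a`. -/
noncomputable def intBall (a : ℤ) (R : ℝ) : Finset ℤ :=
  Finset.Icc ⌈a - R⌉ ⌊a + R⌋

/-- The points of `ℤ²` within sup-distance `R` of `a`: a product set containing the Euclidean ball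
of the same radius. -/
noncomputable def box (a : ℤ × ℤ) (R : ℝ) : Finset (ℤ × ℤ) :=
  intBall a.1 R ×ˢ intBall a.2 R

/-- The Euclidean inner product on `ℤ²`, with integer values. -/
def dot (x y : ℤ × ℤ) : ℤ :=
  x.1 * y.1 + x.2 * y.2

theorem mem_intBall {a k : ℤ} {R : ℝ} : k ∈ intBall a R ↔ |(k - a : ℝ)| ≤ R := by
  rw [intBall, Finset.mem_Icc, Int.ceil_le, Int.le_floor, abs_sub_le_iff]
  constructor <;> rintro ⟨h₁, h₂⟩ <;> constructor <;> linarith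

theorem mem_box {a x : ℤ × ℤ} {R : ℝ} :
    x ∈ box a R ↔ |(x.1 - a.1 : ℝ)| ≤ R ∧ |(x.2 - a.2 : ℝ)| ≤ R := by
  rw [box, Finset.mem_product, mem_intBall, mem_intBall]

theorem sub_mem_box {a b x y : ℤ × ℤ} {R S : ℝ} (hx : x ∈ box a R) (hy : y ∈ box b S) :
    x - y ∈ box (a - b) (R + S) := by
  rw [mem_box] at hx hy ⊢
  simp only [Prod.fst_sub, Prod.snd_sub, Int.cast_sub, sub_sub_sub_comm _ _ (a.1 : ℝ),
    sub_sub_sub_comm _ _ (a.2 : ℝ)]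
  exact ⟨(abs_sub _ _).trans (add_le_add hx.1 hy.1), (abs_sub _ _).trans (add_le_add hx.2 hy.2)⟩

theorem abs_sub_le_of_mem_intBall {a k l : ℤ} {R : ℝ} (hk : k ∈ intBall a R)
    (hl : l ∈ intBall a R) : |(k - l : ℝ)| ≤ 2 * R := by
  rw [mem_intBall, abs_sub_le_iff] at hk hl
  rw [abs_sub_le_iff]
  constructor <;> linarith

theorem card_intBall_le (a : ℤ) {R : ℝ} (hR : 1 ≤ R) : (#(intBall a R) : ℝ) ≤ 3 * R := by
  have h₁ := Int.floor_le (a + R)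
  have h₂ := Int.le_ceil (a - R)
  have : (((⌊a + R⌋ + 1 - ⌈a - R⌉).toNat : ℤ) : ℝ) ≤ 3 * R := by
    rw [Int.toNat_eq_max]
    push_cast
    exact max_le (by linarith) (by linarith)
  rwa [intBall, Int.card_Icc]

theorem card_intBall_product_le (a b : ℤ) {N M : ℝ} (hN : 1 ≤ N) (hM : 1 ≤ M) :
    (#(intBall a N ×ˢ intBall b M) : ℝ) ≤ 9 * (N * M) := by
  rw [Finset.card_product]
  push_cast
  calc (#(intBall a N) : ℝ) * #(intBall b M) ≤ 3 * N * (3 * M) := by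
        gcongr
        exacts [card_intBall_le a hN, card_intBall_le b hM]
    _ = 9 * (N * M) := by ring

theorem card_filter_product_le {α β : Type*} (A : Finset α) (B : Finset β)
    (P : α × β → Prop) [DecidablePred P] {c : ℝ} (h : ∀ a ∈ A, (#{b ∈ B | P (a, b)} : ℝ) ≤ c) :
    (#{q ∈ A ×ˢ B | P q} : ℝ) ≤ #A * c := by
  rw [Finset.card_filter, Finset.sum_product]
  simp_rw [← Finset.card_filter]
  push_cast
  simpa only [nsmul_eq_mul] using Finset.sum_le_card_nsmul A _ c h

theorem exists_card_box_dot_sub_eq_le {ε : ℝ} (hε : 0 < ε) :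
    ∃ C : ℝ, 0 < C ∧ ∀ R : ℝ, 1 ≤ R → ∀ (c a b : ℤ × ℤ) (m : ℤ),
      (#{x ∈ box c R | dot (x - a) (x - b) = m} : ℝ) ≤ C * R ^ ε := by
  obtain ⟨C, hC, hcard⟩ := exists_card_norm_eq_le (half_pos hε)
  refine ⟨C * 32 ^ (ε / 2), by positivity, fun R hR c a b m ↦ ?_⟩
  -- Polarization: `|2x - a - b|² = 4 ⟨x - a, x - b⟩ + |a - b|²`.
  let w (x : ℤ × ℤ) : GaussianInt := ⟨2 * x.1 - a.1 - b.1, 2 * x.2 - a.2 - b.2⟩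
  have w_injective : Function.Injective w := fun x y h ↦ by
    simp only [w, Zsqrtd.mk.injEq] at h
    ext <;> omega
  rw [← Finset.card_image_of_injective _ w_injective]
  calc _ ≤ C * (32 * R ^ 2) ^ (ε / 2) := by
        refine hcard (4 * m + dot (a - b) (a - b)) _ (by nlinarith) _ ?_ ?_ <;>
          simp only [Finset.forall_mem_image, Finset.mem_filter]
        · rintro x ⟨-, rfl⟩
          simp only [w, Zsqrtd.norm_def, dot, Prod.fst_sub, Prod.snd_sub]
          ring
        · rintro x ⟨hx, -⟩ y ⟨hy, -⟩
          rw [box, Finset.mem_product] at hx hy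
          have h₁ := sq_le_sq.2 ((abs_sub_le_of_mem_intBall hx.1 hy.1).trans (le_abs_self _))
          have h₂ := sq_le_sq.2 ((abs_sub_le_of_mem_intBall hx.2 hy.2).trans (le_abs_self _))
          simp only [w, natCast_gaussianNorm, Zsqrtd.re_sub, Zsqrtd.im_sub]
          push_cast
          linarith
    _ = C * 32 ^ (ε / 2) * R ^ ε := by
        rw [Real.mul_rpow (by norm_num) (by positivity), ← Real.rpow_natCast_mul (by positivity),
          mul_assoc]
        congr 3
        push_cast
        ring

theorem exists_card_intBall_mul_eq_le {ε : ℝ} (hε : 0 < ε) :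
    ∃ C : ℝ, 0 < C ∧ ∀ N M : ℝ, 1 ≤ N → 1 ≤ M → ∀ a b : ℤ, ∀ k ≠ 0,
      (#{p ∈ intBall a N ×ˢ intBall b M | p.1 * p.2 = k} : ℝ) ≤ C * (N * M) ^ ε := by
  obtain ⟨C, hC, hcard⟩ := isFiniteNorm_natAbsHom.exists_card_mul_eq_le hε
  refine ⟨C * 2 ^ ε, by positivity, fun N M hN hM a b k hk ↦ ?_⟩
  have natAbsHom_sub_le {c x y : ℤ} {R : ℝ} (hR : R ≤ N * M) (hx : x ∈ intBall c R)
      (hy : y ∈ intBall c R) : (Int.natAbsHom (x - y) : ℝ) ≤ 2 * (N * M) := by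
    have := abs_sub_le_of_mem_intBall hx hy
    calc (Int.natAbsHom (x - y) : ℝ) = |(x - y : ℝ)| := by
          exact_mod_cast Nat.cast_natAbs (x - y)
      _ ≤ 2 * (N * M) := by linarith
  calc _ ≤ C * (2 * (N * M)) ^ ε := by
        refine hcard k hk _ (by nlinarith) _ ?_ ?_ ?_ <;>
          simp only [Finset.mem_filter, Finset.mem_product]
        · exact fun p hp ↦ hp.2
        · exact fun p hp q hq ↦ natAbsHom_sub_le (by nlinarith) hp.1.1 hq.1.1
        · exact fun p hp q hq ↦ natAbsHom_sub_le (by nlinarith) hp.1.2 hq.1.2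
    _ = C * 2 ^ ε * (N * M) ^ ε := by
        rw [Real.mul_rpow (by norm_num) (by positivity), mul_assoc]

theorem exists_card_box_dot_eq_of_mul_ne_zero_le {ε : ℝ} (hε : 0 < ε) :
    ∃ C : ℝ, 0 < C ∧ ∀ N M : ℝ, 1 ≤ N → 1 ≤ M → ∀ (a b : ℤ × ℤ) (m : ℤ),
      (#{p ∈ box a N ×ˢ box b M | dot p.1 p.2 = m ∧ p.1.2 * p.2.2 ≠ 0} : ℝ) ≤
        C * (N * M) ^ (1 + ε) := by
  obtain ⟨C, hC, hcard⟩ := exists_card_intBall_mul_eq_le hε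
  refine ⟨9 * C, by positivity, fun N M hN hM a b m ↦ ?_⟩
  have fiber_le (x : ℤ × ℤ) :
      (#{y ∈ intBall a.2 N ×ˢ intBall b.2 M | x.1 * x.2 + y.1 * y.2 = m ∧ y.1 * y.2 ≠ 0} : ℝ) ≤
        C * (N * M) ^ ε := by
    by_cases hk : m - x.1 * x.2 = 0
    · rw [Finset.filter_false_of_mem fun y _ h ↦ h.2 (by linarith [h.1])]
      simpa using by positivity
    · refine le_trans ?_ (hcard N M hN hM a.2 b.2 _ hk)
      gcongr with y
      intro h
      linarith [h.1]
  calc (#{p ∈ box a N ×ˢ box b M | dot p.1 p.2 = m ∧ p.1.2 * p.2.2 ≠ 0} : ℝ) ≤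
      #{q ∈ (intBall a.1 N ×ˢ intBall b.1 M) ×ˢ (intBall a.2 N ×ˢ intBall b.2 M) |
        q.1.1 * q.1.2 + q.2.1 * q.2.2 = m ∧ q.2.1 * q.2.2 ≠ 0} := by
        refine Nat.cast_le.2 <| Finset.card_le_card_of_injOn (Equiv.prodProdProdComm ℤ ℤ ℤ ℤ)
          (fun p hp ↦ ?_) (Equiv.injective _).injOn
        obtain ⟨hp, hdot⟩ := Finset.mem_filter.1 hp
        obtain ⟨hp₁, hp₂⟩ := Finset.mem_product.1 hp
        rw [box, Finset.mem_product] at hp₁ hp₂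
        exact Finset.mem_filter.2 ⟨Finset.mk_mem_product (Finset.mk_mem_product hp₁.1 hp₂.1)
          (Finset.mk_mem_product hp₁.2 hp₂.2), hdot⟩
    _ ≤ #(intBall a.1 N ×ˢ intBall b.1 M) * (C * (N * M) ^ ε) :=
        card_filter_product_le _ _ _ fun x _ ↦ fiber_le x
    _ ≤ 9 * (N * M) * (C * (N * M) ^ ε) := by
        gcongr
        exact card_intBall_product_le _ _ hN hM
    _ = 9 * C * (N * M) ^ (1 + ε) := by
        rw [Real.rpow_one_add' (by positivity) (by positivity)]
        ring

theorem injOn_of_dot_eq (m : ℤ) :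
    Set.InjOn (fun p : (ℤ × ℤ) × ℤ × ℤ ↦ (p.1, p.2.2)) {p | p.1.1 ≠ 0 ∧ dot p.1 p.2 = m} := by
  rintro ⟨⟨x, x'⟩, y, y'⟩ ⟨hx, hm⟩ ⟨⟨z, z'⟩, w, w'⟩ ⟨-, hm'⟩ h
  obtain ⟨⟨rfl, rfl⟩, rfl⟩ : (x = z ∧ x' = z') ∧ y' = w' := by simpa using h
  obtain rfl : y = w := mul_left_cancel₀ hx (add_right_cancel (hm.trans hm'.symm))
  rfl

theorem card_le_of_fst_snd_eq_zero {N M : ℝ} (hN : 1 ≤ N) (hM : 1 ≤ M) {a b : ℤ × ℤ} {m : ℤ}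
    {T : Finset ((ℤ × ℤ) × ℤ × ℤ)} (hT : T ⊆ box a N ×ˢ box b M)
    (h : ∀ p ∈ T, p.1.1 ≠ 0 ∧ dot p.1 p.2 = m) (h₀ : ∀ p ∈ T, p.1.2 = 0) :
    (#T : ℝ) ≤ 9 * (N * M) := by
  refine le_trans (Nat.cast_le.2 ?_) (card_intBall_product_le a.1 b.2 hN hM)
  refine Finset.card_le_card_of_injOn (fun p ↦ (p.1.1, p.2.2)) (fun p hp ↦ ?_)
    fun p hp q hq hpq ↦ injOn_of_dot_eq m (h p hp) (h q hq) ?_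
  · obtain ⟨hp₁, hp₂⟩ := Finset.mem_product.1 (hT hp)
    exact Finset.mk_mem_product (Finset.mem_product.1 hp₁).1 (Finset.mem_product.1 hp₂).2
  · obtain ⟨hfst, hsnd⟩ := Prod.mk.inj hpq
    exact Prod.ext (Prod.ext hfst ((h₀ p hp).trans (h₀ q hq).symm)) hsnd

theorem card_le_of_snd_snd_eq_zero {N : ℝ} (hN : 1 ≤ N) {a : ℤ × ℤ} {m : ℤ}
    {T : Finset ((ℤ × ℤ) × ℤ × ℤ)} (hT : ∀ p ∈ T, p.1 ∈ box a N)
    (h : ∀ p ∈ T, p.1.1 ≠ 0 ∧ dot p.1 p.2 = m) (h₀ : ∀ p ∈ T, p.2.2 = 0) :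
    (#T : ℝ) ≤ 9 * (N * N) := by
  refine le_trans (Nat.cast_le.2 ?_) (card_intBall_product_le a.1 a.2 hN hN)
  exact Finset.card_le_card_of_injOn Prod.fst hT fun p hp q hq hpq ↦
    injOn_of_dot_eq m (h p hp) (h q hq) (Prod.ext hpq ((h₀ p hp).trans (h₀ q hq).symm))

theorem card_le_of_fst_fst_eq_zero {N M : ℝ} (hN : 1 ≤ N) (hM : 1 ≤ M) {a b : ℤ × ℤ}
    {T : Finset ((ℤ × ℤ) × ℤ × ℤ)} (hT : T ⊆ box a N ×ˢ box b M)
    (h : ∀ p ∈ T, p.1.1 = 0) (h₀ : ∀ p ∈ T, p.2.2 = 0) : (#T : ℝ) ≤ 9 * (N * M) := by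
  refine le_trans (Nat.cast_le.2 ?_) (card_intBall_product_le a.2 b.1 hN hM)
  refine Finset.card_le_card_of_injOn (fun p ↦ (p.1.2, p.2.1)) (fun p hp ↦ ?_)
    fun p hp q hq hpq ↦ ?_
  · obtain ⟨hp₁, hp₂⟩ := Finset.mem_product.1 (hT hp)
    exact Finset.mk_mem_product (Finset.mem_product.1 hp₁).2 (Finset.mem_product.1 hp₂).1
  · obtain ⟨hfst, hsnd⟩ := Prod.mk.inj hpq
    exact Prod.ext (Prod.ext ((h p hp).trans (h q hq).symm) hfst)
      (Prod.ext hsnd ((h₀ p hp).trans (h₀ q hq).symm))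

theorem card_box_dot_eq_of_mul_eq_zero_le {N M : ℝ} (hN : 1 ≤ N) (hNM : N ≤ M) (a b : ℤ × ℤ)
    (m : ℤ) :
    (#{p ∈ box a N ×ˢ box b M | p.1 ≠ 0 ∧ dot p.1 p.2 = m ∧ p.1.2 * p.2.2 = 0} : ℝ) ≤
      27 * (N * M) := by
  have hM : 1 ≤ M := hN.trans hNM
  set B := box a N ×ˢ box b M
  have cover : {p ∈ B | p.1 ≠ 0 ∧ dot p.1 p.2 = m ∧ p.1.2 * p.2.2 = 0} ⊆
      {p ∈ B | (p.1.1 ≠ 0 ∧ dot p.1 p.2 = m) ∧ p.1.2 = 0} ∪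
        ({p ∈ B | (p.1.1 ≠ 0 ∧ dot p.1 p.2 = m) ∧ p.2.2 = 0} ∪
          {p ∈ B | p.1.1 = 0 ∧ p.2.2 = 0}) := fun p hp ↦ by
    simp only [Finset.mem_filter, Finset.mem_union, mul_eq_zero, ne_eq, Prod.ext_iff,
      Prod.fst_zero, Prod.snd_zero] at hp ⊢
    tauto
  calc (#{p ∈ B | p.1 ≠ 0 ∧ dot p.1 p.2 = m ∧ p.1.2 * p.2.2 = 0} : ℝ) ≤
      #{p ∈ B | (p.1.1 ≠ 0 ∧ dot p.1 p.2 = m) ∧ p.1.2 = 0} +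
        (#{p ∈ B | (p.1.1 ≠ 0 ∧ dot p.1 p.2 = m) ∧ p.2.2 = 0} +
          #{p ∈ B | p.1.1 = 0 ∧ p.2.2 = 0}) := by
        exact_mod_cast (Finset.card_le_card cover).trans <|
          (Finset.card_union_le _ _).trans (Nat.add_le_add_left (Finset.card_union_le _ _) _)
    _ ≤ 9 * (N * M) + (9 * (N * N) + 9 * (N * M)) := by
        gcongr
        · exact card_le_of_fst_snd_eq_zero hN hM (Finset.filter_subset _ _)
            (fun p hp ↦ (Finset.mem_filter.1 hp).2.1) fun p hp ↦ (Finset.mem_filter.1 hp).2.2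
        · exact card_le_of_snd_snd_eq_zero hN
            (fun p hp ↦ (Finset.mem_product.1 (Finset.mem_filter.1 hp).1).1)
            (fun p hp ↦ (Finset.mem_filter.1 hp).2.1) fun p hp ↦ (Finset.mem_filter.1 hp).2.2
        · exact card_le_of_fst_fst_eq_zero hN hM (Finset.filter_subset _ _)
            (fun p hp ↦ (Finset.mem_filter.1 hp).2.1) fun p hp ↦ (Finset.mem_filter.1 hp).2.2
    _ ≤ 27 * (N * M) := by nlinarith

theorem exists_card_box_dot_eq_le {ε : ℝ} (hε : 0 < ε) :
    ∃ C : ℝ, 0 < C ∧ ∀ N M : ℝ, 1 ≤ N → N ≤ M → ∀ (a b : ℤ × ℤ) (m : ℤ),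
      (#{p ∈ box a N ×ˢ box b M | p.1 ≠ 0 ∧ dot p.1 p.2 = m} : ℝ) ≤ C * (N * M) ^ (1 + ε) := by
  obtain ⟨C, hC, hcard⟩ := exists_card_box_dot_eq_of_mul_ne_zero_le hε
  refine ⟨C + 27, by positivity, fun N M hN hNM a b m ↦ ?_⟩
  have hM : 1 ≤ M := hN.trans hNM
  calc (#{p ∈ box a N ×ˢ box b M | p.1 ≠ 0 ∧ dot p.1 p.2 = m} : ℝ) ≤
      #{p ∈ box a N ×ˢ box b M | dot p.1 p.2 = m ∧ p.1.2 * p.2.2 ≠ 0} +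
        #{p ∈ box a N ×ˢ box b M | p.1 ≠ 0 ∧ dot p.1 p.2 = m ∧ p.1.2 * p.2.2 = 0} := by
        rw [← Nat.cast_add]
        gcongr
        refine (Finset.card_le_card fun p hp ↦ ?_).trans (Finset.card_union_le _ _)
        rw [← Finset.filter_or]
        grind
    _ ≤ C * (N * M) ^ (1 + ε) + 27 * (N * M) :=
        add_le_add (hcard N M hN hM a b m) (card_box_dot_eq_of_mul_eq_zero_le hN hNM a b m)
    _ ≤ C * (N * M) ^ (1 + ε) + 27 * (N * M) ^ (1 + ε) := by
        gcongr
        exact Real.self_le_rpow_of_one_le (by nlinarith) (by linarith)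
    _ = (C + 27) * (N * M) ^ (1 + ε) := by ring

end LatticeBoxes

section ResonantTriples

theorem phiFn_eq_two_mul_dot {n n₁ n₂ n₃ : ℤ × ℤ} (h : n = n₁ - n₂ + n₃) :
    phiFn n n₁ n₂ n₃ = 2 * dot (n - n₁) (n - n₃) := by
  obtain rfl : n₂ = n₁ - n + n₃ := by rw [h]; abel
  simp only [phiFn, nsq, dot, Prod.fst_sub, Prod.fst_add, Prod.snd_sub, Prod.snd_add]
  ring

theorem mem_box_zero_of_znorm_le {n : ℤ × ℤ} {R : ℝ} (h : znorm n ≤ R) : n ∈ box 0 R := by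
  rw [mem_box, Prod.fst_zero, Prod.snd_zero, Int.cast_zero, sub_zero, sub_zero]
  exact ⟨(Real.abs_le_sqrt (by nlinarith)).trans h, (Real.abs_le_sqrt (by nlinarith)).trans h⟩

theorem znorm_le_of_simDyadic {N : ℝ} {n : ℤ × ℤ} (h : simDyadic N n) : znorm n ≤ N := by
  obtain ⟨rfl, h⟩ | ⟨-, -, h⟩ := h <;> exact h

theorem IsDyadic.one_le {N : ℝ} (h : IsDyadic N) : 1 ≤ N := by
  obtain ⟨k, rfl⟩ := h
  exact one_le_pow₀ one_le_two

/-- The triples `(n, n₁, n₂)` completing `n₃` to an element of `S^{𝐍,(m)}`, with the dyadic annuli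
relaxed to balls and `n₃` unrestricted. -/
def resonantTriples (N N₁ N₂ : ℝ) (m : ℤ) (n₃ : ℤ × ℤ) : Set ((ℤ × ℤ) × (ℤ × ℤ) × (ℤ × ℤ)) :=
  {t | t.1 = t.2.1 - t.2.2 + n₃ ∧ t.1 ≠ t.2.1 ∧ t.1 ≠ n₃ ∧ phiFn t.1 t.2.1 t.2.2 n₃ = m ∧
    znorm t.1 ≤ N ∧ znorm t.2.1 ≤ N₁ ∧ znorm t.2.2 ≤ N₂}

namespace resonantTriples

variable {N N₁ N₂ : ℝ} {m : ℤ} {n₃ : ℤ × ℤ} {t : (ℤ × ℤ) × (ℤ × ℤ) × (ℤ × ℤ)}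

theorem finite (N N₁ N₂ : ℝ) (m : ℤ) (n₃ : ℤ × ℤ) : (resonantTriples N N₁ N₂ m n₃).Finite :=
  (box 0 N ×ˢ box 0 N₁ ×ˢ box 0 N₂).finite_toSet.subset
    fun _ ⟨_, _, _, _, h, h₁, h₂⟩ ↦ by
      simpa using ⟨mem_box_zero_of_znorm_le h, mem_box_zero_of_znorm_le h₁,
        mem_box_zero_of_znorm_le h₂⟩

theorem setOf_sMem_subset (N N₁ N₂ N₃ : ℝ) (m : ℤ) (n₃ : ℤ × ℤ) :
    {t | SMem N N₁ N₂ N₃ m t.1 t.2.1 t.2.2 n₃} ⊆ resonantTriples N N₁ N₂ m n₃ :=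
  fun _ ⟨h, hn₁, hn₃, hm, hN, hN₁, hN₂, _⟩ ↦ ⟨h, hn₁, hn₃, hm, znorm_le_of_simDyadic hN,
    znorm_le_of_simDyadic hN₁, znorm_le_of_simDyadic hN₂⟩

theorem dot_eq (ht : t ∈ resonantTriples N N₁ N₂ m n₃) :
    dot (t.1 - t.2.1) (t.1 - n₃) = m / 2 := by
  have := (phiFn_eq_two_mul_dot ht.1).symm.trans ht.2.2.2.1
  omega

theorem thd_eq (ht : t ∈ resonantTriples N N₁ N₂ m n₃) : t.2.2 = t.2.1 - t.1 + n₃ := by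
  rw [ht.1]
  abel

theorem ncard_le_ncard_swap (N N₁ N₂ : ℝ) (m : ℤ) (n₃ : ℤ × ℤ) :
    (resonantTriples N N₁ N₂ m n₃).ncard ≤ (resonantTriples N₂ N₁ N m n₃).ncard := by
  refine Set.ncard_le_ncard_of_injOn (fun t ↦ (t.2.2, t.2.1, t.1)) ?_ ?_ (finite ..)
  · rintro ⟨n, n₁, n₂⟩ ht
    obtain ⟨h, hn₁, hn₃, hm, hN, hN₁, hN₂⟩ := id ht
    refine ⟨thd_eq ht, fun h' ↦ hn₃ ?_, fun h' ↦ hn₁ ?_, ?_, hN₂, hN₁, hN⟩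
    · simp_all
    · simp_all
    · rw [← hm]
      simp only [phiFn]
      ring
  · rintro ⟨n, n₁, n₂⟩ - ⟨n', n₁', n₂'⟩ - h
    simp_all

theorem exists_ncard_le_sq_mul_rpow {ε : ℝ} (hε : 0 < ε) :
    ∃ C : ℝ, 0 < C ∧ ∀ N N₁ N₂ : ℝ, 1 ≤ N → 1 ≤ N₁ → ∀ (m : ℤ) (n₃ : ℤ × ℤ),
      ((resonantTriples N N₁ N₂ m n₃).ncard : ℝ) ≤ C * (N₁ ^ 2 * N ^ ε) := by
  obtain ⟨C, hC, hcard⟩ := exists_card_box_dot_sub_eq_le hε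
  refine ⟨9 * C, by positivity, fun N N₁ N₂ hN hN₁ m n₃ ↦ ?_⟩
  calc ((resonantTriples N N₁ N₂ m n₃).ncard : ℝ) ≤
      #{q ∈ box 0 N₁ ×ˢ box 0 N | dot (q.2 - q.1) (q.2 - n₃) = m / 2} := by
        rw [← Set.ncard_coe_finset]
        gcongr
        refine Set.ncard_le_ncard_of_injOn (fun t ↦ (t.2.1, t.1)) (fun t ht ↦ ?_)
          (fun t ht u hu h ↦ ?_) (Finset.finite_toSet _)
        · obtain ⟨-, -, -, -, hN, hN₁, -⟩ := id ht
          exact Finset.mem_filter.2 ⟨Finset.mk_mem_product (mem_box_zero_of_znorm_le hN₁)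
            (mem_box_zero_of_znorm_le hN), dot_eq ht⟩
        · obtain ⟨h₁, h⟩ := Prod.mk.inj h
          exact Prod.ext h (Prod.ext h₁ (by rw [thd_eq ht, thd_eq hu, h, h₁]))
    _ ≤ #(box 0 N₁) * (C * N ^ ε) :=
        card_filter_product_le _ _ _ fun x _ ↦ hcard N hN 0 x n₃ (m / 2)
    _ ≤ 9 * (N₁ * N₁) * (C * N ^ ε) := by
        gcongr
        exact card_intBall_product_le _ _ hN₁ hN₁
    _ = 9 * C * (N₁ ^ 2 * N ^ ε) := by ring

theorem ncard_le_card_box_dot_eq {M : ℝ} {b : ℤ × ℤ}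
    (hb : ∀ t ∈ resonantTriples N N₁ N₂ m n₃, t.1 - t.2.1 ∈ box b M) :
    (resonantTriples N N₁ N₂ m n₃).ncard ≤
      #{p ∈ box (-n₃) N ×ˢ box b M | p.1 ≠ 0 ∧ dot p.1 p.2 = m / 2} := by
  rw [← Set.ncard_coe_finset]
  refine Set.ncard_le_ncard_of_injOn (fun t ↦ (t.1 - n₃, t.1 - t.2.1)) (fun t ht ↦ ?_)
    (fun t ht u hu h ↦ ?_) (Finset.finite_toSet _)
  · obtain ⟨-, -, hn₃, -, hN, -⟩ := id ht
    have := mem_box.1 (mem_box_zero_of_znorm_le hN)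
    have fst_mem : t.1 - n₃ ∈ box (-n₃) N := by simpa [mem_box] using this
    have hdot : dot (t.1 - n₃) (t.1 - t.2.1) = m / 2 := by
      rw [← dot_eq ht, dot, dot]
      ring
    exact Finset.mem_filter.2
      ⟨Finset.mk_mem_product fst_mem (hb t ht), sub_ne_zero.2 hn₃, hdot⟩
  · obtain ⟨h₃, h₁⟩ := Prod.mk.inj h
    have hn : t.1 = u.1 := sub_left_injective h₃
    have hn₁ : t.2.1 = u.2.1 := by rwa [hn, sub_right_inj] at h₁
    exact Prod.ext hn (Prod.ext hn₁ (by rw [thd_eq ht, thd_eq hu, hn, hn₁]))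

theorem exists_ncard_le_mul_fst_snd {ε : ℝ} (hε : 0 < ε) :
    ∃ C : ℝ, 0 < C ∧ ∀ N N₁ N₂ : ℝ, 1 ≤ N → 1 ≤ N₁ → ∀ (m : ℤ) (n₃ : ℤ × ℤ),
      ((resonantTriples N N₁ N₂ m n₃).ncard : ℝ) ≤ C * (N * N₁) ^ (1 + ε) := by
  obtain ⟨C, hC, hcircle⟩ := exists_ncard_le_sq_mul_rpow hε
  obtain ⟨C', hC', hpair⟩ := exists_card_box_dot_eq_le hε
  refine ⟨C + C' * 2 ^ (1 + ε), by positivity, fun N N₁ N₂ hN hN₁ m n₃ ↦ ?_⟩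
  obtain hle | hle := le_total N N₁
  · have sub_mem (t) (ht : t ∈ resonantTriples N N₁ N₂ m n₃) : t.1 - t.2.1 ∈ box (0 - 0) (N + N₁) :=
      sub_mem_box (mem_box_zero_of_znorm_le ht.2.2.2.2.1)
        (mem_box_zero_of_znorm_le ht.2.2.2.2.2.1)
    calc ((resonantTriples N N₁ N₂ m n₃).ncard : ℝ) ≤ C' * (N * (N + N₁)) ^ (1 + ε) :=
          (Nat.cast_le.2 (ncard_le_card_box_dot_eq sub_mem)).trans
            (hpair N (N + N₁) hN (by linarith) _ _ _)
      _ ≤ C' * (N * (2 * N₁)) ^ (1 + ε) := by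
          gcongr
          linarith
      _ = C' * 2 ^ (1 + ε) * (N * N₁) ^ (1 + ε) := by
          rw [mul_left_comm, Real.mul_rpow (by norm_num) (by positivity), mul_assoc]
      _ ≤ (C + C' * 2 ^ (1 + ε)) * (N * N₁) ^ (1 + ε) := by gcongr; linarith
  · calc ((resonantTriples N N₁ N₂ m n₃).ncard : ℝ) ≤ C * (N₁ ^ 2 * N ^ ε) :=
          hcircle N N₁ N₂ hN hN₁ m n₃
      _ ≤ C * (N * N₁ * (N * N₁) ^ ε) := by
          gcongr
          · nlinarith
          · nlinarith
      _ = C * (N * N₁) ^ (1 + ε) := by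
          rw [Real.rpow_one_add' (by positivity) (by positivity)]
      _ ≤ (C + C' * 2 ^ (1 + ε)) * (N * N₁) ^ (1 + ε) := by
          gcongr
          linarith [show 0 < C' * 2 ^ (1 + ε) by positivity]

theorem exists_ncard_le_mul_fst_thd {ε : ℝ} (hε : 0 < ε) :
    ∃ C : ℝ, 0 < C ∧ ∀ N N₁ N₂ : ℝ, 1 ≤ N → 1 ≤ N₂ → ∀ (m : ℤ) (n₃ : ℤ × ℤ),
      ((resonantTriples N N₁ N₂ m n₃).ncard : ℝ) ≤ C * (N * N₂) ^ (1 + ε) := by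
  obtain ⟨C, hC, hpair⟩ := exists_card_box_dot_eq_le hε
  have of_le {N N₁ N₂ : ℝ} (hN : 1 ≤ N) (hle : N ≤ N₂) (m : ℤ) (n₃ : ℤ × ℤ) :
      ((resonantTriples N N₁ N₂ m n₃).ncard : ℝ) ≤ C * (N * N₂) ^ (1 + ε) := by
    refine (Nat.cast_le.2 (ncard_le_card_box_dot_eq fun t ht ↦ ?_)).trans
      (hpair N N₂ hN hle (-n₃) n₃ (m / 2))
    have := mem_box.1 (mem_box_zero_of_znorm_le ht.2.2.2.2.2.2)
    rw [show t.1 - t.2.1 = n₃ - t.2.2 by rw [thd_eq ht]; abel]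
    simpa [mem_box] using this
  refine ⟨C, hC, fun N N₁ N₂ hN hN₂ m n₃ ↦ ?_⟩
  obtain hle | hle := le_total N N₂
  · exact of_le hN hle m n₃
  · rw [mul_comm N]
    exact (Nat.cast_le.2 (ncard_le_ncard_swap ..)).trans (of_le hN₂ hle m n₃)

end resonantTriples

open resonantTriples

theorem stmt8_general (ε : ℝ) (hε : 0 < ε) :
    ∃ C : ℝ, 0 < C ∧ ∀ N N₁ N₂ : ℝ, 1 ≤ N → 1 ≤ N₁ → 1 ≤ N₂ → ∀ (m : ℤ) (n₃ : ℤ × ℤ),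
      ((resonantTriples N N₁ N₂ m n₃).ncard : ℝ) ≤
        C * min (min (N₁ ^ 2 * (min N N₂) ^ ε) ((N * N₁) ^ (1 + ε)))
          (min ((N * N₂) ^ (1 + ε)) ((N₁ * N₂) ^ (1 + ε))) := by
  obtain ⟨A, hA, hsq⟩ := exists_ncard_le_sq_mul_rpow hε
  obtain ⟨B, -, hfst_snd⟩ := exists_ncard_le_mul_fst_snd hε
  obtain ⟨C, -, hfst_thd⟩ := exists_ncard_le_mul_fst_thd hε
  refine ⟨max A (max B C), by positivity, fun N N₁ N₂ hN hN₁ hN₂ m n₃ ↦ ?_⟩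
  have swap : ((resonantTriples N N₁ N₂ m n₃).ncard : ℝ) ≤
      (resonantTriples N₂ N₁ N m n₃).ncard :=
    Nat.cast_le.2 (ncard_le_ncard_swap ..)
  have le_sq : ((resonantTriples N N₁ N₂ m n₃).ncard : ℝ) ≤ A * (N₁ ^ 2 * (min N N₂) ^ ε) := by
    obtain h | h := min_choice N N₂ <;> rw [h]
    exacts [hsq N N₁ N₂ hN hN₁ m n₃, swap.trans (hsq N₂ N₁ N hN₂ hN₁ m n₃)]
  have le_mul_snd_thd : ((resonantTriples N N₁ N₂ m n₃).ncard : ℝ) ≤ B * (N₁ * N₂) ^ (1 + ε) := by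
    rw [mul_comm N₁]
    exact swap.trans (hfst_snd N₂ N₁ N hN₂ hN₁ m n₃)
  simp only [mul_min_of_nonneg _ _ (show 0 ≤ max A (max B C) by positivity)]
  refine le_min (le_min (le_sq.trans ?_) ((hfst_snd N N₁ N₂ hN hN₁ m n₃).trans ?_))
    (le_min ((hfst_thd N N₁ N₂ hN hN₂ m n₃).trans ?_) (le_mul_snd_thd.trans ?_)) <;>
  · gcongr
    simp

end ResonantTriples

theorem stmt8 (ε : ℝ) (hε : 0 < ε) :
    ∃ C : ℝ, 0 < C ∧ ∀ N N₁ N₂ N₃ : ℝ,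
      IsDyadic N → IsDyadic N₁ → IsDyadic N₂ → IsDyadic N₃ → ∀ m : ℤ, ∀ n₃ : ℤ × ℤ,
      (({t : (ℤ × ℤ) × (ℤ × ℤ) × (ℤ × ℤ) |
          SMem N N₁ N₂ N₃ m t.1 t.2.1 t.2.2 n₃}).ncard : ℝ) ≤
        C * min (min (N₁ ^ 2 * (min N N₂) ^ ε) ((N * N₁) ^ (1 + ε)))
                (min ((N * N₂) ^ (1 + ε)) ((N₁ * N₂) ^ (1 + ε))) := by
  obtain ⟨C, hC, hcard⟩ := stmt8_general ε hε
  refine ⟨C, hC, fun N N₁ N₂ N₃ hN hN₁ hN₂ _ m n₃ ↦ ?_⟩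
  exact (Nat.cast_le.2 (Set.ncard_le_ncard (resonantTriples.setOf_sMem_subset ..)
    (resonantTriples.finite ..))).trans (hcard N N₁ N₂ hN.one_le hN₁.one_le hN₂.one_le m n₃)
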